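/- Let G be a finite simple graph and let r be a real number with r ≥ 2. If G has an orientation ω such that τ(C,ω) ≤ r for every cycle C of G satisfying 0 < |C| (mod r) < 2, then G has a circular r-coloring. -/

import Mathlib

/-!
Give each arc `x → y` of the orientation the weight `1` when traversed forwards and `1 - r` when
traversed backwards (`arcWeight`), and consider rooted forests in `G` with the potential `p v`
equal to the weight of the tree path from the root to `v` (`IsForest`).  Among the finitely many
forests, take one that maximizes `∑ v, p v`; the coloring is `p` reduced modulo `r`.

Suppose `x`, `y` are adjacent and `p y < p x + w(x, y)`.  If `y` is not an ancestor of `x`, then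
making `x` the parent of `y` raises the potential of every descendant of `y` by the same positive
amount, contrary to maximality (`IsForest.reparent`).  So `y` is an ancestor of `x`, and the tree
path from `y` to `x` closes up to a cycle of `G` of positive weight `p x - p y + w(x, y)`
(`IsForest.exists_cycle`).  The weight of a cycle `C` is `|C| - r |C⁻|`, which is congruent to `|C|`
modulo `r`, and its positivity contradicts `τ(C, ω) ≤ r`.  By hypothesis, therefore,
`p x - p y + w(x, y)` is not congruent to a number in `(0, 2)`.  If the colors of `x` and `y` were
at circular distance less than `1`, this congruence would hold for both `(x, y)` and `(y, x)`; hence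
both inequalities `p y ≥ p x + w(x, y)` and `p x ≥ p y + w(y, x)` hold, which place the
potential difference in `[1, r - 1]`, a contradiction.
-/

/-- `x (mod r)`: the unique `t ∈ [0, r)` with `t ≡ x (mod r)` (for `r > 0`). -/
noncomputable def rmod (x r : ℝ) : ℝ := x - r * (⌊x / r⌋ : ℝ)

/-- A cycle of length `n` in a graph `G`, encoded (together with a chosen direction
of traversal) as an injective map `f : ZMod n → V` (so the vertices
`f 0, …, f (n-1)` are distinct) with each `f i, f (i+1)` adjacent. -/
def IsCycle {V : Type*} (G : SimpleGraph V) (n : ℕ) (f : ZMod n → V) : Prop :=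
  0 < n ∧ Function.Injective f ∧ ∀ i : ZMod n, G.Adj (f i) (f (i + 1))

/-- An orientation of `G`: for each edge `u v`, exactly one of the arcs `u → v`,
`v → u` is chosen (`o u v = true` meaning the edge is oriented from `u` to `v`). -/
def IsOrientation {V : Type*} (G : SimpleGraph V) (o : V → V → Bool) : Prop :=
  ∀ u v, G.Adj u v → (o u v = true ↔ o v u = false)

/-- `|C_ω^+|`: the number of edges of the cycle `f` whose orientation under `o`
agrees with the direction of traversal. -/
def plusCount {V : Type*} (o : V → V → Bool) (n : ℕ) (f : ZMod n → V) : ℕ :=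
  ((Finset.range n).filter
    (fun (i : ℕ) => o (f (i : ZMod n)) (f ((i : ZMod n) + 1)) = true)).card

/-- `τ(C, ω) ≤ r`: both `|C_ω^+|` and `|C_ω^-| = |C| - |C_ω^+|` are positive, and
`|C| ≤ r·|C_ω^+|` and `|C| ≤ r·|C_ω^-|` (so `τ = max{|C|/|C_ω^+|, |C|/|C_ω^-|} ≤ r`,
with quotients by zero read as `+∞`). -/
def TauLe {V : Type*} (o : V → V → Bool) (n : ℕ) (f : ZMod n → V) (r : ℝ) : Prop :=
  0 < plusCount o n f ∧ plusCount o n f < n ∧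
    (n : ℝ) ≤ r * (plusCount o n f : ℝ) ∧
    (n : ℝ) ≤ r * ((n : ℝ) - (plusCount o n f : ℝ))

/-- A circular `r`-coloring of a graph `G`: a map `f : V → [0, r)` with
`1 ≤ |f x - f y| ≤ r - 1` for every edge `x y`. -/
def IsCircGraphColoring {V : Type*} (G : SimpleGraph V) (r : ℝ) (f : V → ℝ) : Prop :=
  (∀ v, 0 ≤ f v ∧ f v < r) ∧
    ∀ u v, G.Adj u v → 1 ≤ |f u - f v| ∧ |f u - f v| ≤ r - 1

/-- A `(k,d)`-coloring of `G`: a map `f : V → {0, 1, …, k-1}` with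
`d ≤ |f x - f y| ≤ k - d` for every edge `x y`. -/
def IsKDColoring {V : Type*} (G : SimpleGraph V) (k d : ℕ) (f : V → ℤ) : Prop :=
  (∀ v, 0 ≤ f v ∧ f v < (k : ℤ)) ∧
    ∀ u v, G.Adj u v → (d : ℤ) ≤ |f u - f v| ∧ |f u - f v| ≤ (k : ℤ) - (d : ℤ)

/-! ### Weighted forests -/

/-- The weight of the step from `x` to `y`: `1` along the orientation, `1 - r` against it. -/
def arcWeight {V : Type*} (o : V → V → Bool) (r : ℝ) (x y : V) : ℝ :=
  if o x y = true then 1 else 1 - r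

/-- `par` is the parent map of a rooted forest in `G` (roots are the fixed points of `par`, and
isolated roots are allowed), and `p v` is the weight of the tree path from the root to `v`.
Acyclicity is expressed by a rank function `d` that decreases strictly from child to parent. -/
def IsForest {V : Type*} (G : SimpleGraph V) (o : V → V → Bool) (r : ℝ)
    (par : V → V) (p : V → ℝ) : Prop :=
  ∃ d : V → ℕ, ∀ v, (par v = v → p v = 0) ∧
    (par v ≠ v → G.Adj (par v) v ∧ p v = p (par v) + arcWeight o r (par v) v ∧ d (par v) < d v)

theorem IsForest.unique {V : Type*} {G : SimpleGraph V} {o : V → V → Bool} {r : ℝ}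
    {par : V → V} {p q : V → ℝ} (hp : IsForest G o r par p) (hq : IsForest G o r par q) :
    p = q := by
  obtain ⟨d, hd⟩ := hp
  obtain ⟨e, he⟩ := hq
  have key : ∀ n v, d v < n → p v = q v := by
    intro n
    induction n with
    | zero => intro v hv; omega
    | succ n ih =>
      intro v hv
      by_cases hf : par v = v
      · rw [(hd v).1 hf, (he v).1 hf]
      · obtain ⟨-, h2, h3⟩ := (hd v).2 hf
        obtain ⟨-, h5, -⟩ := (he v).2 hf
        rw [h2, h5, ih (par v) (by omega)]
  funext v
  exact key _ v (Nat.lt_succ_self _)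

open Classical in
/-- Hanging the subtree of `v` below a neighbor `u` outside that subtree gives a forest again, in
which all potentials of that subtree are shifted by the same amount. -/
theorem IsForest.reparent {V : Type*} {G : SimpleGraph V} {o : V → V → Bool} {r : ℝ}
    {par : V → V} {p : V → ℝ} (hp : IsForest G o r par p) {u v : V} (huv : G.Adj u v)
    (hanc : ¬ ∃ k, par^[k] u = v) :
    IsForest G o r (Function.update par v u)
      (fun x => if ∃ k, par^[k] x = v then p x + (p u + arcWeight o r u v - p v) else p x) := by
  obtain ⟨d, hd⟩ := hp
  refine ⟨fun x => if ∃ k, par^[k] x = v then d x + d u + 1 else d x, fun x => ?_⟩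
  by_cases hx : x = v
  · subst hx
    have hself : ∃ k, par^[k] x = x := ⟨0, rfl⟩
    refine ⟨fun h => ?_, fun _ => ?_⟩
    · rw [Function.update_self] at h
      exact absurd h huv.ne
    · simp only [Function.update_self, if_neg hanc, if_pos hself]
      exact ⟨huv, by ring, by omega⟩
  · have hiff : (∃ k, par^[k] (par x) = v) ↔ ∃ k, par^[k] x = v := by
      constructor
      · rintro ⟨k, hk⟩
        exact ⟨k + 1, by rwa [Function.iterate_succ_apply]⟩
      · rintro ⟨k, hk⟩
        cases k with
        | zero => exact absurd hk hx
        | succ k => exact ⟨k, by rwa [Function.iterate_succ_apply] at hk⟩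
    simp only [Function.update_of_ne hx, hiff]
    refine ⟨fun hfix => ?_, fun hne => ?_⟩
    · have : ¬ ∃ k, par^[k] x = v := by
        rintro ⟨k, hk⟩
        rw [Function.iterate_fixed hfix] at hk
        exact hx hk
      rw [if_neg this]
      exact (hd x).1 hfix
    · obtain ⟨h1, h2, h3⟩ := (hd x).2 hne
      refine ⟨h1, ?_, ?_⟩
      · split_ifs
        · rw [h2]; ring
        · exact h2
      · split_ifs <;> omega

/-! ### Cycles closed by an edge to an ancestor -/

/-- A closed sequence of `k + 1` distinct vertices as a cycle, with its total weight computed as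
`|C| - r |C⁻|`. -/
theorem isCycle_of_seq {V : Type*} {G : SimpleGraph V} (o : V → V → Bool) (r : ℝ)
    (k : ℕ) (g : ℕ → V) (hinj : ∀ i j, i < j → j ≤ k → g i ≠ g j)
    (hadj : ∀ j < k, G.Adj (g j) (g (j + 1))) (hlast : G.Adj (g k) (g 0)) :
    ∃ f : ZMod (k + 1) → V, IsCycle G (k + 1) f ∧
      ∑ j ∈ Finset.range k, arcWeight o r (g j) (g (j + 1)) + arcWeight o r (g k) (g 0)
        = ((k + 1 : ℕ) : ℝ) - r * (((k + 1 : ℕ) : ℝ) - plusCount o (k + 1) f) := by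
  have hval : ∀ j ≤ k, ((j : ZMod (k + 1))).val = j := fun j hj =>
    ZMod.val_natCast_of_lt (by omega)
  have hsucc : ∀ j < k, ((j : ZMod (k + 1)) + 1).val = j + 1 := fun j hj => by
    have := hval (j + 1) (by omega)
    rwa [Nat.cast_add, Nat.cast_one] at this
  have hwrap : ((k : ZMod (k + 1)) + 1).val = 0 := by
    have : ((k : ZMod (k + 1)) + 1) = 0 := by
      have := ZMod.natCast_self (k + 1)
      rwa [Nat.cast_add, Nat.cast_one] at this
    rw [this, ZMod.val_zero]
  refine ⟨fun i => g i.val, ⟨Nat.succ_pos k, ?_, ?_⟩, ?_⟩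
  · intro a b hab
    have ha := ZMod.val_lt a
    have hb := ZMod.val_lt b
    apply ZMod.val_injective
    rcases lt_trichotomy a.val b.val with h | h | h
    · exact absurd hab (hinj _ _ h (by omega))
    · exact h
    · exact absurd hab.symm (hinj _ _ h (by omega))
  · intro i
    have hi := ZMod.val_lt i
    obtain ⟨j, hj, rfl⟩ : ∃ j : ℕ, j ≤ k ∧ (j : ZMod (k + 1)) = i :=
      ⟨i.val, by omega, ZMod.natCast_zmod_val i⟩
    show G.Adj (g _) (g _)
    rcases hj.lt_or_eq with h | h
    · rw [hval j hj, hsucc j h]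
      exact hadj j h
    · subst h
      rw [hval j le_rfl, hwrap]
      exact hlast
  · set f : ZMod (k + 1) → V := fun i => g i.val with hf
    have h1 : ∑ j ∈ Finset.range k, arcWeight o r (g j) (g (j + 1)) + arcWeight o r (g k) (g 0)
        = ∑ j ∈ Finset.range (k + 1),
            arcWeight o r (f (j : ZMod (k + 1))) (f ((j : ZMod (k + 1)) + 1)) := by
      rw [Finset.sum_range_succ]
      congr 1
      · refine Finset.sum_congr rfl fun j hj => ?_
        have hj := Finset.mem_range.1 hj
        simp only [hf]
        rw [hval j hj.le, hsucc j hj]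
      · simp only [hf]
        rw [hval k le_rfl, hwrap]
    have h2 : ∀ x y, arcWeight o r x y = (1 - r) + r * (if o x y = true then 1 else 0) := by
      intro x y
      unfold arcWeight
      split_ifs <;> ring
    rw [h1]
    simp only [h2]
    rw [Finset.sum_add_distrib, ← Finset.mul_sum, Finset.sum_boole, Finset.sum_const,
      Finset.card_range, nsmul_eq_mul]
    unfold plusCount
    ring

/-- If `v` is an ancestor of its neighbor `u`, the tree path from `v` to `u` and the edge `u v` form
a cycle of weight `p u - p v + w(u, v)`.  When `v` is the parent of `u` this is the degenerate cycle
of length `2` that `IsCycle` admits. -/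
theorem IsForest.exists_cycle {V : Type*} {G : SimpleGraph V} {o : V → V → Bool} {r : ℝ}
    {par : V → V} {p : V → ℝ} (hp : IsForest G o r par p) {u v : V} (huv : G.Adj u v)
    (hanc : ∃ k, par^[k] u = v) :
    ∃ (n : ℕ) (f : ZMod n → V), IsCycle G n f ∧
      p u - p v + arcWeight o r u v = (n : ℝ) - r * ((n : ℝ) - plusCount o n f) := by
  classical
  obtain ⟨d, hd⟩ := hp
  -- The least number of steps from `u` up to `v`, so that no root is met before `v`.
  obtain ⟨k, hk, hmin⟩ : ∃ k, par^[k] u = v ∧ ∀ i < k, par^[i] u ≠ v :=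
    ⟨Nat.find hanc, Nat.find_spec hanc, fun i hi => Nat.find_min hanc hi⟩
  have hnf : ∀ i < k, par (par^[i] u) ≠ par^[i] u := by
    intro i hi hfix
    apply hmin i hi
    have : par^[(k - i) + i] u = par^[i] u := by
      rw [Function.iterate_add_apply, Function.iterate_fixed hfix]
    rwa [Nat.sub_add_cancel hi.le, hk, eq_comm] at this
  have hstep := fun i (hi : i < k) => (hd (par^[i] u)).2 (hnf i hi)
  have hdec : ∀ i j, i < j → j ≤ k → d (par^[j] u) < d (par^[i] u) := by
    intro i j hij
    induction j, hij using Nat.le_induction with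
    | base =>
      intro h
      rw [Function.iterate_succ_apply']
      exact (hstep i (by omega)).2.2
    | succ j hj ih =>
      intro h
      have := ih (by omega)
      have h3 := (hstep j (by omega)).2.2
      rw [Function.iterate_succ_apply']
      omega
  have hpar : ∀ j < k, par (par^[k - (j + 1)] u) = par^[k - j] u := by
    intro j hj
    rw [← Function.iterate_succ_apply' par]
    congr 2
    omega
  have hfirst : par^[k - 0] u = v := hk
  have hlast : par^[k - k] u = u := by simp
  obtain ⟨f, hf, hw⟩ := isCycle_of_seq (G := G) o r k (fun j => par^[k - j] u)
    (fun i j hij hj heq => by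
      have := hdec (k - j) (k - i) (by omega) (by omega)
      rw [heq] at this
      exact lt_irrefl _ this)
    (fun j hj => by
      have := (hstep (k - (j + 1)) (by omega)).1
      rwa [hpar j hj] at this)
    (by simpa only [hfirst, hlast] using huv)
  refine ⟨k + 1, f, hf, ?_⟩
  rw [← hw]
  simp only [hfirst, hlast]
  congr 1
  -- The weights along the tree path telescope.
  have htel : ∀ j ∈ Finset.range k,
      arcWeight o r (par^[k - j] u) (par^[k - (j + 1)] u)
        = p (par^[k - (j + 1)] u) - p (par^[k - j] u) := by
    intro j hj
    have hj := Finset.mem_range.1 hj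
    have := (hstep (k - (j + 1)) (by omega)).2.1
    rw [hpar j hj] at this
    linarith
  rw [Finset.sum_congr rfl htel, Finset.sum_range_sub (fun j => p (par^[k - j] u))]
  simp only [hfirst, hlast]

/-! ### A forest of maximum total potential and its coloring -/

/-- The potential is determined by the parent map, so only finitely many sums occur. -/
theorem exists_max_forest {V : Type*} [Fintype V] (G : SimpleGraph V) (o : V → V → Bool) (r : ℝ) :
    ∃ par p, IsForest G o r par p ∧
      ∀ par₁ p₁, IsForest G o r par₁ p₁ → ∑ v, p₁ v ≤ ∑ v, p v := by
  classical
  let S := {par : V → V // ∃ p, IsForest G o r par p}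
  have : Nonempty S := ⟨⟨id, fun _ => 0, fun _ => 0, fun v => ⟨fun _ => rfl, fun h => absurd rfl h⟩⟩⟩
  obtain ⟨s, hs⟩ := Finite.exists_max (fun s : S => ∑ v, s.2.choose v)
  refine ⟨s.1, s.2.choose, s.2.choose_spec, fun par₁ p₁ h₁ => ?_⟩
  have h2 := hs ⟨par₁, p₁, h₁⟩
  have h3 : p₁ = (⟨par₁, p₁, h₁⟩ : S).2.choose := h₁.unique (⟨par₁, p₁, h₁⟩ : S).2.choose_spec
  rw [h3]
  exact h2

theorem rmod_eq {x r t : ℝ} {m : ℤ} (hr : 0 < r) (h : x = t + r * m) (h0 : 0 ≤ t) (h1 : t < r) :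
    rmod x r = t := by
  have : ⌊x / r⌋ = m := by
    rw [Int.floor_eq_iff, le_div_iff₀ hr, div_lt_iff₀ hr]
    constructor <;> nlinarith
  unfold rmod
  rw [this, h]
  ring

/-- **Corollary 2.** Let `r ≥ 2` be real. If `G` has an orientation `ω` with
`τ(C, ω) ≤ r` for every cycle `C` satisfying `0 < |C| (mod r) < 2`, then `G` has a
circular `r`-coloring. -/
theorem circular_coloring_of_orientation {V : Type*} [Fintype V]
    (G : SimpleGraph V) (r : ℝ) (hr : 2 ≤ r)
    (o : V → V → Bool) (ho : IsOrientation G o)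
    (h : ∀ (n : ℕ) (f : ZMod n → V), IsCycle G n f →
      0 < rmod (n : ℝ) r → rmod (n : ℝ) r < 2 → TauLe o n f r) :
    ∃ φ : V → ℝ, IsCircGraphColoring G r φ := by
  classical
  have hr0 : 0 < r := by linarith
  obtain ⟨par, p, hp, hmax⟩ := exists_max_forest G o r
  have key : ∀ x y, G.Adj x y → ∀ m : ℤ, 0 < p x - p y + arcWeight o r x y - r * m →
      p x - p y + arcWeight o r x y - r * m < 2 → p x + arcWeight o r x y ≤ p y := by
    intro x y hxy m h0 h2
    by_contra! hlt
    by_cases hanc : ∃ k, par^[k] x = y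
    · obtain ⟨n, f, hf, hw⟩ := hp.exists_cycle hxy hanc
      -- The quotient of `n` by `r` is `m` plus the number of backward edges of the cycle.
      have hmod : rmod (n : ℝ) r = p x - p y + arcWeight o r x y - r * m :=
        rmod_eq (m := (n : ℤ) - plusCount o n f + m) hr0 (by push_cast; linarith) h0.le
          (by linarith)
      obtain ⟨-, -, -, h4⟩ := h n f hf (by rw [hmod]; exact h0) (by rw [hmod]; exact h2)
      linarith
    · refine absurd (hmax _ _ (hp.reparent hxy hanc)) (not_le.2 ?_)
      apply Finset.sum_lt_sum
      · intro z _
        split_ifs <;> linarith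
      · refine ⟨y, Finset.mem_univ y, ?_⟩
        rw [if_pos ⟨0, rfl⟩]
        linarith
  have arc : ∀ x y, G.Adj x y → o x y = true → ∀ m : ℤ,
      ¬ (-1 < p x - p y - r * m ∧ p x - p y - r * m < 1) := by
    rintro x y hxy hoxy m ⟨h1, h2⟩
    have w1 : arcWeight o r x y = 1 := if_pos hoxy
    have w2 : arcWeight o r y x = 1 - r := by
      have : o y x = false := (ho x y hxy).1 hoxy
      simp [arcWeight, this]
    have k1 := key x y hxy m (by rw [w1]; linarith) (by rw [w1]; linarith)
    have k2 := key y x hxy.symm (-(m + 1)) (by rw [w2]; push_cast; linarith)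
      (by rw [w2]; push_cast; linarith)
    rw [w1] at k1
    rw [w2] at k2
    -- The difference `p x - p y` lies in `[1 - r, -1]`, so `m` would lie strictly between `-1` and `0`.
    have m1 : m < 0 := by
      have : (m : ℝ) < 0 := by nlinarith
      exact_mod_cast this
    have m2 : -1 < m := by
      have : (-1 : ℝ) < m := by nlinarith
      exact_mod_cast this
    omega
  have edge : ∀ x y, G.Adj x y → ∀ m : ℤ,
      ¬ (-1 < p x - p y - r * m ∧ p x - p y - r * m < 1) := by
    intro x y hxy m hm
    by_cases hoxy : o x y = true
    · exact arc x y hxy hoxy m hm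
    · have hoyx : o y x = true := (ho y x hxy.symm).2 (by simpa using hoxy)
      refine arc y x hxy.symm hoyx (-m) ⟨?_, ?_⟩ <;> push_cast <;> linarith [hm.1, hm.2]
  have hrange : ∀ v, 0 ≤ rmod (p v) r ∧ rmod (p v) r < r := by
    intro v
    have h1 := Int.floor_le (p v / r)
    have h2 := Int.lt_floor_add_one (p v / r)
    rw [le_div_iff₀ hr0] at h1
    rw [div_lt_iff₀ hr0] at h2
    unfold rmod
    constructor <;> nlinarith
  refine ⟨fun v => rmod (p v) r, hrange, fun x y hxy => ?_⟩
  have hx := hrange x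
  have hy := hrange y
  have hm : rmod (p x) r - rmod (p y) r
      = p x - p y - r * ((⌊p x / r⌋ - ⌊p y / r⌋ : ℤ) : ℝ) := by
    unfold rmod
    push_cast
    ring
  have e := edge x y hxy
  generalize ⌊p x / r⌋ - ⌊p y / r⌋ = m at hm
  have e0 := e m
  have e1 := e (m + 1)
  have e2 := e (m - 1)
  push_cast at e1 e2
  show 1 ≤ |rmod (p x) r - rmod (p y) r| ∧ |rmod (p x) r - rmod (p y) r| ≤ r - 1
  constructor
  · by_contra! hlt
    rw [hm] at hlt
    exact e0 (abs_lt.1 hlt)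
  · rw [abs_le]
    constructor
    · by_contra! hlt
      exact e2 ⟨by linarith, by linarith⟩
    · by_contra! hlt
      exact e1 ⟨by linarith, by linarith⟩
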